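/- Let P be the Borel probability measure on ℝ with density f given by f(x) = 1/2 for x ∈ [0, 1/2] ∪ [1, 3/2], f(x) = 1 for x ∈ (1/2, 1), and f(x) = 0 otherwise. Then the set { (3 − √2)/8, 3(3 − √2)/8, 3(1 + √2)/8, (9 + √2)/8 } ≈ {0.198223, 0.594670, 0.905330, 1.301777} is an optimal set of four-means for P, and the fourth quantization error is V₄(P) = (19 − 12√2)/192 ≈ 0.01057. -/

import Mathlib

open MeasureTheory Set

/-- Distortion error of a set `α` with respect to the measure `Q`. -/
noncomputable def distortion (Q : Measure ℝ) (α : Set ℝ) : ℝ :=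
  ∫ x, sInf ((fun a => (x - a) ^ 2) '' α) ∂Q

/-- The `n`-th quantization error of the measure `Q`. -/
noncomputable def quantErr (Q : Measure ℝ) (n : ℕ) : ℝ :=
  sInf { v : ℝ | ∃ α : Set ℝ, α.Finite ∧ α.Nonempty ∧ α.ncard ≤ n ∧ v = distortion Q α }

/-- `α` is an optimal set of `n`-means for `Q`. -/
def IsOptimal (Q : Measure ℝ) (n : ℕ) (α : Set ℝ) : Prop :=
  α.Finite ∧ 1 ≤ α.ncard ∧ α.ncard ≤ n ∧ distortion Q α = quantErr Q n

/-- The density of the mixed distribution `P = (1/2) P₁ + (1/2) P₂`. -/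
noncomputable def f2 (x : ℝ) : ℝ :=
  if x ∈ Icc (0 : ℝ) (1 / 2) ∪ Icc (1 : ℝ) (3 / 2) then 1 / 2
  else if x ∈ Ioo (1 / 2 : ℝ) 1 then 1
  else 0

/-- The mixed distribution `P = (1/2) P₁ + (1/2) P₂`. -/
noncomputable def P2 : Measure ℝ :=
  volume.withDensity fun x => ENNReal.ofReal (f2 x)

/-!
The density of `P` is half the sum of the indicators of `[0, 3/2]` and `[1/2, 1]`, and it is
symmetric about `3/4`. Cutting the line at the border `s` between the cells of the second and the
third point leaves two mirror-image problems: quantize the part of `P` on `[0, s]` by two points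
`a ≤ b`. In the main case the error is a positive combination of the cubes of `a`, `b - a`,
`b - 1/2` and `s - b`. Bounding each cube below by its tangent at the optimal configuration for
`s = 3/4`, stationarity cancels `a` and `b` and leaves an affine function of `s`; its values at `s`
and at `3/2 - s` add up to the claimed error. The other positions of `a` and `b` leave room to
spare.
-/

open Metric

section Cubes

lemma tangent_le_cube {x y : ℝ} (hx : 0 ≤ x) (hy : 0 ≤ y) :
    3 * y ^ 2 * x - 2 * y ^ 3 ≤ x ^ 3 := by
  nlinarith [mul_nonneg (sq_nonneg (x - y)) (by positivity : 0 ≤ x + 2 * y)]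

lemma cube_add_cube_le_add_cube {x y : ℝ} (hx : 0 ≤ x) (hy : 0 ≤ y) :
    x ^ 3 + y ^ 3 ≤ (x + y) ^ 3 := by
  nlinarith [mul_nonneg (mul_nonneg hx hy) (add_nonneg hx hy)]

end Cubes

section Integrals

lemma integral_sub_sq (s t a : ℝ) :
    ∫ x in s..t, (x - a) ^ 2 = ((t - a) ^ 3 - (s - a) ^ 3) / 3 := by
  rw [intervalIntegral.integral_comp_sub_right (fun x => x ^ 2) a, integral_pow]
  norm_num

variable {a b s t : ℝ}

lemma min_sq_sub_of_le_midpoint {x : ℝ} (hab : a ≤ b) (hx : x ≤ (a + b) / 2) :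
    min ((x - a) ^ 2) ((x - b) ^ 2) = (x - a) ^ 2 :=
  min_eq_left (by nlinarith)

lemma min_sq_sub_of_midpoint_le {x : ℝ} (hab : a ≤ b) (hx : (a + b) / 2 ≤ x) :
    min ((x - a) ^ 2) ((x - b) ^ 2) = (x - b) ^ 2 :=
  min_eq_right (by nlinarith)

lemma integral_min_sq_sub_of_le_midpoint (hab : a ≤ b) (hst : s ≤ t) (ht : t ≤ (a + b) / 2) :
    ∫ x in s..t, min ((x - a) ^ 2) ((x - b) ^ 2) = ((t - a) ^ 3 - (s - a) ^ 3) / 3 := by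
  rw [← integral_sub_sq]
  refine intervalIntegral.integral_congr fun x hx => ?_
  rw [uIcc_of_le hst] at hx
  exact min_sq_sub_of_le_midpoint hab (hx.2.trans ht)

lemma integral_min_sq_sub_of_midpoint_le (hab : a ≤ b) (hst : s ≤ t) (hs : (a + b) / 2 ≤ s) :
    ∫ x in s..t, min ((x - a) ^ 2) ((x - b) ^ 2) = ((t - b) ^ 3 - (s - b) ^ 3) / 3 := by
  rw [← integral_sub_sq]
  refine intervalIntegral.integral_congr fun x hx => ?_
  rw [uIcc_of_le hst] at hx
  exact min_sq_sub_of_midpoint_le hab (hs.trans hx.1)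

lemma integral_min_sq_sub (hab : a ≤ b) (hs : s ≤ (a + b) / 2) (ht : (a + b) / 2 ≤ t) :
    ∫ x in s..t, min ((x - a) ^ 2) ((x - b) ^ 2) =
      ((a - s) ^ 3 + (b - a) ^ 3 / 4 + (t - b) ^ 3) / 3 := by
  have hcont : Continuous fun x : ℝ => min ((x - a) ^ 2) ((x - b) ^ 2) := by fun_prop
  rw [← intervalIntegral.integral_add_adjacent_intervals (b := (a + b) / 2)
      (hcont.intervalIntegrable _ _) (hcont.intervalIntegrable _ _),
    integral_min_sq_sub_of_le_midpoint hab hs le_rfl,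
    integral_min_sq_sub_of_midpoint_le hab ht le_rfl]
  ring

end Integrals

section Quantization

lemma sInf_image_sq_sub {α : Set ℝ} (hα : α.Nonempty) (x : ℝ) :
    sInf ((fun a => (x - a) ^ 2) '' α) = infDist x α ^ 2 := by
  have hbdd : BddBelow ((fun a => (x - a) ^ 2) '' α) :=
    ⟨0, forall_mem_image.2 fun a _ => sq_nonneg (x - a)⟩
  have hsqrt : √(sInf ((fun a => (x - a) ^ 2) '' α)) = infDist x α := by
    rw [Monotone.map_csInf_of_continuousAt Real.continuous_sqrt.continuousAt
        (fun _ _ => Real.sqrt_le_sqrt) (hα.image _) hbdd,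
      image_image, infDist_eq_iInf, sInf_image']
    simp only [Real.sqrt_sq_eq_abs, Real.dist_eq]
  rw [← hsqrt, Real.sq_sqrt]
  exact Real.sInf_nonneg (forall_mem_image.2 fun a _ => sq_nonneg (x - a))

lemma distortion_eq_integral_infDist_sq (Q : Measure ℝ) {α : Set ℝ} (hα : α.Nonempty) :
    distortion Q α = ∫ x, infDist x α ^ 2 ∂Q := by
  simp only [distortion, sInf_image_sq_sub hα]

lemma infDist_sq_le {α : Set ℝ} {a : ℝ} (ha : a ∈ α) (x : ℝ) : infDist x α ^ 2 ≤ (x - a) ^ 2 := by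
  rw [← sq_abs (x - a), ← Real.dist_eq]
  exact pow_le_pow_left₀ infDist_nonneg (infDist_le_dist_of_mem ha) 2

lemma infDist_sub_left {E : Type*} [SeminormedAddCommGroup E] (c x : E) (α : Set E) :
    infDist (c - x) α = infDist x ((c - ·) '' α) := by
  have h := infDist_image (IsometryEquiv.subLeft c).isometry (t := α) (x := c - x)
  simpa using h.symm

lemma min_sq_sub_le_infDist_sq {α : Set ℝ} {a b c x : ℝ} (hne : α.Nonempty)
    (hα : ∀ z ∈ α, z = a ∨ z = b ∨ c ≤ z) (hbc : b ≤ c) (hx : x ≤ (b + c) / 2) :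
    min ((x - a) ^ 2) ((x - b) ^ 2) ≤ infDist x α ^ 2 := by
  rw [← sInf_image_sq_sub hne]
  refine le_csInf (hne.image _) (forall_mem_image.2 fun z hz => ?_)
  rcases hα z hz with rfl | rfl | hcz
  · exact min_le_left _ _
  · exact min_le_right _ _
  · exact (min_le_right _ _).trans (by nlinarith)

lemma sq_sub_projIcc_le {u v x : ℝ} (huv : u ≤ v) (hx : x ∈ Icc u v) (y : ℝ) :
    (x - projIcc u v huv y) ^ 2 ≤ (x - y) ^ 2 := by
  have h := abs_projIcc_sub_projIcc huv (c := x) (d := y)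
  rw [projIcc_of_mem huv hx] at h
  exact sq_le_sq.2 h

lemma isOptimal_of_forall_distortion_le {Q : Measure ℝ} {n : ℕ} {α : Set ℝ} (hfin : α.Finite)
    (hne : α.Nonempty) (hcard : α.ncard ≤ n)
    (hmin : ∀ β : Set ℝ, β.Finite → β.Nonempty → β.ncard ≤ n → distortion Q α ≤ distortion Q β) :
    IsOptimal Q n α := by
  refine ⟨hfin, (ncard_pos hfin).2 hne, hcard, (IsLeast.csInf_eq ⟨?_, ?_⟩).symm⟩
  · exact ⟨α, hfin, hne, hcard, rfl⟩
  · rintro v ⟨β, hβfin, hβne, hβcard, rfl⟩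
    exact hmin β hβfin hβne hβcard

lemma exists_monotone_range_eq {β : Type*} [LinearOrder β] {n : ℕ} {α : Set β} (hfin : α.Finite)
    (hne : α.Nonempty) (hcard : α.ncard ≤ n) : ∃ y : Fin n → β, Monotone y ∧ range y = α := by
  have := hfin.to_subtype
  have := hne.to_subtype
  obtain ⟨e⟩ : Nonempty (α ↪ Fin n) := by
    have := Fintype.ofFinite α
    refine Function.Embedding.nonempty_of_card_le ?_
    rwa [Fintype.card_fin, ← Nat.card_eq_fintype_card]
  let y : Fin n → β := fun i => (Function.invFun e i : α)
  have hy : range y = α := by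
    change range (Subtype.val ∘ Function.invFun e) = α
    rw [(Function.invFun_surjective e.injective).range_comp, Subtype.range_coe]
  exact ⟨y ∘ Tuple.sort y, Tuple.monotone_sort y, by rw [(Tuple.sort y).surjective.range_comp, hy]⟩

lemma ncard_insert_insert_insert_singleton_le {β : Type*} (a b c d : β) :
    ({a, b, c, d} : Set β).ncard ≤ 4 := by
  classical
  simpa [← Set.ncard_coe_finset] using Finset.card_le_four (a := a) (b := b) (c := c) (d := d)

lemma exists_mem_Icc_eq_or_le {β : Type*} [LinearOrder β] {u v : β} (huv : u ≤ v) (p : β) :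
    ∃ s ∈ Icc u v, (s = u ∨ s ≤ p) ∧ (s = v ∨ p ≤ s) := by
  rcases le_total p u with hpu | hup
  · exact ⟨u, left_mem_Icc.2 huv, .inl rfl, .inr hpu⟩
  rcases le_total p v with hpv | hvp
  · exact ⟨p, ⟨hup, hpv⟩, .inr le_rfl, .inr le_rfl⟩
  · exact ⟨v, right_mem_Icc.2 huv, .inr hvp, .inl rfl⟩

end Quantization

section MixedDistribution

open scoped ENNReal

lemma P2_eq_add_restrict :
    P2 = (2⁻¹ : ℝ≥0∞) • volume.restrict (Icc 0 (3 / 2)) +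
      (2⁻¹ : ℝ≥0∞) • volume.restrict (Ioo (1 / 2) 1) := by
  have hdensity : (fun x => ENNReal.ofReal (f2 x)) =
      (Icc (0 : ℝ) (3 / 2)).indicator (fun _ => (2⁻¹ : ℝ≥0∞)) +
        (Ioo (1 / 2 : ℝ) 1).indicator (fun _ => (2⁻¹ : ℝ≥0∞)) := by
    ext x
    have hhalf : ENNReal.ofReal (1 / 2) = 2⁻¹ := by
      rw [one_div, ENNReal.ofReal_inv_of_pos two_pos, ENNReal.ofReal_ofNat]
    by_cases hmid : x ∈ Ioo (1 / 2 : ℝ) 1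
    · have houter : x ∉ Icc (0 : ℝ) (1 / 2) ∪ Icc (1 : ℝ) (3 / 2) := by grind
      have hsupp : x ∈ Icc (0 : ℝ) (3 / 2) := by grind
      simp only [f2, if_neg houter, if_pos hmid, Pi.add_apply, indicator_of_mem hsupp,
        indicator_of_mem hmid, ENNReal.inv_two_add_inv_two, ENNReal.ofReal_one]
    · have houter : x ∈ Icc (0 : ℝ) (1 / 2) ∪ Icc (1 : ℝ) (3 / 2) ↔ x ∈ Icc (0 : ℝ) (3 / 2) := by
        grind
      by_cases hsupp : x ∈ Icc (0 : ℝ) (3 / 2) <;>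
        simp only [f2, houter, hmid, hsupp, hhalf, if_true, if_false, Pi.add_apply, indicator,
          add_zero, ENNReal.ofReal_zero]
  rw [P2, hdensity, withDensity_add_left (measurable_const.indicator measurableSet_Icc),
    withDensity_indicator measurableSet_Icc, withDensity_indicator measurableSet_Ioo,
    withDensity_const, withDensity_const]

lemma integral_P2 {g : ℝ → ℝ} (hg : Continuous g) :
    ∫ x, g x ∂P2 = ((∫ x in (0 : ℝ)..3 / 2, g x) + ∫ x in (1 / 2 : ℝ)..1, g x) / 2 := by
  have hIcc : IntegrableOn g (Icc 0 (3 / 2)) := hg.integrableOn_Icc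
  have hIoo : IntegrableOn g (Ioo (1 / 2) 1) := hg.integrableOn_Icc.mono_set Ioo_subset_Icc_self
  rw [P2_eq_add_restrict, integral_add_measure (hIcc.smul_measure (by simp))
      (hIoo.smul_measure (by simp)), integral_smul_measure, integral_smul_measure,
    integral_Icc_eq_integral_Ioc, ← integral_Ioc_eq_integral_Ioo,
    ← intervalIntegral.integral_of_le (by norm_num),
    ← intervalIntegral.integral_of_le (by norm_num), ENNReal.toReal_inv, ENNReal.toReal_ofNat,
    smul_eq_mul, smul_eq_mul]
  ring

/-- The integral of `g` over `[0, s]` with respect to `P2`, when `1 / 2 ≤ s ≤ 1`. The formula is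
used for all real `s`, which keeps the identities below free of side conditions. -/
noncomputable def leftCost (s : ℝ) (g : ℝ → ℝ) : ℝ :=
  ((∫ x in (0 : ℝ)..s, g x) + ∫ x in (1 / 2 : ℝ)..s, g x) / 2

lemma integral_P2_eq_leftCost_add {g : ℝ → ℝ} (hg : Continuous g) (s : ℝ) :
    ∫ x, g x ∂P2 = leftCost s g + leftCost (3 / 2 - s) (fun x => g (3 / 2 - x)) := by
  have hsplit (u v : ℝ) : ∫ x in u..v, g x = (∫ x in u..s, g x) + ∫ x in s..v, g x :=
    (intervalIntegral.integral_add_adjacent_intervals (hg.intervalIntegrable _ _)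
      (hg.intervalIntegrable _ _)).symm
  rw [integral_P2 hg, hsplit 0 (3 / 2), hsplit (1 / 2) 1, leftCost, leftCost,
    intervalIntegral.integral_comp_sub_left g, intervalIntegral.integral_comp_sub_left g,
    sub_sub_cancel, sub_zero, show (3 / 2 - 1 / 2 : ℝ) = 1 by norm_num]
  ring

variable {s : ℝ}

lemma leftCost_mono {g h : ℝ → ℝ} (hs : 1 / 2 ≤ s) (hg : Continuous g) (hh : Continuous h)
    (hle : ∀ x ∈ Icc 0 s, g x ≤ h x) : leftCost s g ≤ leftCost s h := by
  have hmono {u : ℝ} (hu : 0 ≤ u) (hus : u ≤ s) : ∫ x in u..s, g x ≤ ∫ x in u..s, h x :=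
    intervalIntegral.integral_mono_on hus (hg.intervalIntegrable _ _) (hh.intervalIntegrable _ _)
      fun x hx => hle x ⟨hu.trans hx.1, hx.2⟩
  unfold leftCost
  linarith [hmono le_rfl (by linarith), hmono (by norm_num) hs]

lemma leftCost_nonneg {g : ℝ → ℝ} (hs : 1 / 2 ≤ s) (hg : Continuous g) (hnonneg : ∀ x, 0 ≤ g x) :
    0 ≤ leftCost s g := by
  simpa [leftCost] using leftCost_mono hs continuous_const hg fun x _ => hnonneg x

end MixedDistribution

section LeftHalf

variable {a b s : ℝ}

lemma leftCost_min_sq_sub_of_midpoint_le_half (hab : a ≤ b) (hm₀ : 0 ≤ (a + b) / 2)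
    (hm : (a + b) / 2 ≤ 1 / 2) (hs : 1 / 2 ≤ s) :
    leftCost s (fun x => min ((x - a) ^ 2) ((x - b) ^ 2)) =
      a ^ 3 / 6 + (b - a) ^ 3 / 24 + (b - 1 / 2) ^ 3 / 6 + (s - b) ^ 3 / 3 := by
  rw [leftCost, integral_min_sq_sub hab hm₀ (hm.trans hs),
    integral_min_sq_sub_of_midpoint_le hab hs hm]
  ring

lemma leftCost_min_sq_sub_of_half_le_midpoint (hab : a ≤ b) (hm : 1 / 2 ≤ (a + b) / 2)
    (hms : (a + b) / 2 ≤ s) :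
    leftCost s (fun x => min ((x - a) ^ 2) ((x - b) ^ 2)) =
      a ^ 3 / 6 + (a - 1 / 2) ^ 3 / 6 + (b - a) ^ 3 / 12 + (s - b) ^ 3 / 3 := by
  rw [leftCost, integral_min_sq_sub hab (by linarith) hms, integral_min_sq_sub hab hm hms]
  ring

/-- The tangent at `s = 3 / 4` to the least two-point error of the part of `P2` on `[0, s]`: its
value there is half of the four-point error, its slope is the squared distance from `3 / 4` to the
second optimal point. -/
noncomputable def tangentError (s : ℝ) : ℝ :=
  (19 - 12 * √2) / 384 + (3 * (√2 - 1) / 8) ^ 2 * (s - 3 / 4)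

lemma tangentError_eq (s : ℝ) :
    tangentError s = (19 - 12 * √2) / 384 + 9 * (3 - 2 * √2) / 64 * (s - 3 / 4) := by
  rw [tangentError]
  linear_combination 9 / 64 * (s - 3 / 4) * Real.sq_sqrt zero_le_two

lemma tangentError_add_tangentError (s : ℝ) :
    tangentError s + tangentError (3 / 2 - s) = (19 - 12 * √2) / 192 := by
  unfold tangentError
  ring

lemma sqrt_two_mem_Ioo : √2 ∈ Ioo (1.414 : ℝ) 1.4143 :=
  ⟨Real.lt_sqrt_of_sq_lt (by norm_num), (Real.sqrt_lt' (by norm_num)).2 (by norm_num)⟩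

lemma tangentError_le (hs : 1 / 2 ≤ s) :
    tangentError s ≤ 0.0242 * (s - 1 / 2) - 0.0007 := by
  obtain ⟨hlo, hhi⟩ := sqrt_two_mem_Ioo
  have hslope : 9 * (3 - 2 * √2) / 64 * (s - 1 / 2) ≤ 0.0242 * (s - 1 / 2) :=
    mul_le_mul_of_nonneg_right (by linarith) (sub_nonneg.2 hs)
  rw [tangentError_eq]
  linarith

lemma tangentError_le_of_half_le (ha : 0 ≤ a) (hab : a ≤ b) (hb : 1 / 2 ≤ b) (hbs : b ≤ s) :
    tangentError s ≤ a ^ 3 / 6 + (b - a) ^ 3 / 24 + (b - 1 / 2) ^ 3 / 6 + (s - b) ^ 3 / 3 := by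
  obtain ⟨hlo, hhi⟩ := sqrt_two_mem_Ioo
  have hsq : √2 ^ 2 = 2 := Real.sq_sqrt zero_le_two
  have hcube : √2 ^ 3 = 2 * √2 := by rw [pow_succ, hsq]
  -- The base points are the four lengths at the optimal configuration for `s = 3 / 4`.
  have h₁ := tangent_le_cube ha (y := (3 - √2) / 8) (by linarith)
  have h₂ := tangent_le_cube (sub_nonneg.2 hab) (y := (3 - √2) / 4) (by linarith)
  have h₃ := tangent_le_cube (sub_nonneg.2 hb) (y := (5 - 3 * √2) / 8) (by linarith)
  have h₄ := tangent_le_cube (sub_nonneg.2 hbs) (y := 3 * (√2 - 1) / 8) (by linarith)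
  rw [tangentError_eq]
  ring_nf at h₁ h₂ h₃ h₄ ⊢
  rw [hsq, hcube] at h₁ h₂ h₃ h₄
  linarith

lemma tangentError_le_of_le_half (ha : 0 ≤ a) (hab : a ≤ b) (hb : b ≤ 1 / 2) (hs : 1 / 2 ≤ s) :
    tangentError s ≤ a ^ 3 / 6 + (b - a) ^ 3 / 24 + (b - 1 / 2) ^ 3 / 6 + (s - b) ^ 3 / 3 := by
  have hsuper : (s - 1 / 2) ^ 3 + (1 / 2 - b) ^ 3 ≤ (s - b) ^ 3 := by
    simpa using cube_add_cube_le_add_cube (sub_nonneg.2 hs) (sub_nonneg.2 hb)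
  -- The bound is not sharp here: the base points only approximate the minimizer.
  have h₁ := tangent_le_cube ha (y := 0.1625) (by norm_num)
  have h₂ := tangent_le_cube (sub_nonneg.2 hab) (y := 0.325) (by norm_num)
  have h₃ := tangent_le_cube (sub_nonneg.2 (hb.trans hs)) (y := 0.1625) (by norm_num)
  have h₄ := tangent_le_cube (sub_nonneg.2 hs) (y := 0.15) (by norm_num)
  refine (tangentError_le hs).trans ?_
  linarith

lemma tangentError_le_of_half_le_midpoint (ha : 0 ≤ a) (hab : a ≤ b) (hm : 1 / 2 ≤ (a + b) / 2)
    (hbs : b ≤ s) :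
    tangentError s ≤ a ^ 3 / 6 + (a - 1 / 2) ^ 3 / 6 + (b - a) ^ 3 / 12 + (s - b) ^ 3 / 3 := by
  have hcell : -((b - a) / 2) ^ 3 ≤ (a - 1 / 2) ^ 3 := by
    rw [← Odd.neg_pow (by decide)]
    exact Odd.strictMono_pow (by decide) |>.monotone (by linarith)
  have h₁ := tangent_le_cube ha (y := 1 / 4) (by norm_num)
  have h₂ := tangent_le_cube (sub_nonneg.2 hab) (y := 0.384) (by norm_num)
  have h₃ := tangent_le_cube (sub_nonneg.2 hbs) (y := 0.156) (by norm_num)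
  refine (tangentError_le (by linarith)).trans ?_
  linarith

lemma tangentError_le_leftCost_of_mem_Icc (ha : 0 ≤ a) (hab : a ≤ b) (hbs : b ≤ s)
    (hs : 1 / 2 ≤ s) :
    tangentError s ≤ leftCost s (fun x => min ((x - a) ^ 2) ((x - b) ^ 2)) := by
  rcases le_total ((a + b) / 2) (1 / 2) with hm | hm
  · rw [leftCost_min_sq_sub_of_midpoint_le_half hab (by linarith) hm hs]
    rcases le_total b (1 / 2) with hb | hb
    · exact tangentError_le_of_le_half ha hab hb hs
    · exact tangentError_le_of_half_le ha hab hb hbs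
  · rw [leftCost_min_sq_sub_of_half_le_midpoint hab hm (by linarith)]
    exact tangentError_le_of_half_le_midpoint ha hab hm hbs

lemma tangentError_le_leftCost_min_sq_sub (hab : a ≤ b) (hs : 1 / 2 ≤ s) :
    tangentError s ≤ leftCost s (fun x => min ((x - a) ^ 2) ((x - b) ^ 2)) := by
  have hs₀ : 0 ≤ s := by linarith
  refine (tangentError_le_leftCost_of_mem_Icc (projIcc 0 s hs₀ a).2.1 (monotone_projIcc hs₀ hab)
    (projIcc 0 s hs₀ b).2.2 hs).trans (leftCost_mono hs (by fun_prop) (by fun_prop) fun x hx => ?_)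
  exact min_le_min (sq_sub_projIcc_le hs₀ hx a) (sq_sub_projIcc_le hs₀ hx b)

lemma tangentError_le_leftCost_infDist_sq {α : Set ℝ} {c : ℝ} (hne : α.Nonempty)
    (hα : ∀ z ∈ α, z = a ∨ z = b ∨ c ≤ z) (hab : a ≤ b) (hbc : b ≤ c) (hs : 1 / 2 ≤ s)
    (hsm : s = 1 / 2 ∨ s ≤ (b + c) / 2) :
    tangentError s ≤ leftCost s (fun x => infDist x α ^ 2) := by
  have hcont : Continuous fun x => infDist x α ^ 2 := by fun_prop
  rcases hsm with rfl | hsm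
  · have hnonpos : tangentError (1 / 2) ≤ 0 := (tangentError_le le_rfl).trans (by norm_num)
    exact hnonpos.trans (leftCost_nonneg hs hcont fun x => sq_nonneg _)
  · refine (tangentError_le_leftCost_min_sq_sub hab hs).trans
      (leftCost_mono hs (by fun_prop) hcont fun x hx => ?_)
    exact min_sq_sub_le_infDist_sq hne hα hbc (hx.2.trans hsm)

lemma leftCost_infDist_sq_le {α : Set ℝ} (ha : (3 - √2) / 8 ∈ α) (hb : 3 * (3 - √2) / 8 ∈ α) :
    leftCost (3 / 4) (fun x => infDist x α ^ 2) ≤ (19 - 12 * √2) / 384 := by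
  obtain ⟨hlo, hhi⟩ := sqrt_two_mem_Ioo
  refine (leftCost_mono (by norm_num) (by fun_prop) (by fun_prop) fun x _ =>
    le_min (infDist_sq_le ha x) (infDist_sq_le hb x)).trans_eq ?_
  rw [leftCost_min_sq_sub_of_midpoint_le_half (by linarith) (by linarith) (by linarith)
    (by norm_num)]
  have hcube : √2 ^ 3 = 2 * √2 := by rw [pow_succ, Real.sq_sqrt zero_le_two]
  ring_nf
  rw [hcube]
  ring

end LeftHalf

section FourMeans

lemma integral_infDist_sq_P2 (s : ℝ) (α : Set ℝ) :
    ∫ x, infDist x α ^ 2 ∂P2 = leftCost s (fun x => infDist x α ^ 2) +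
      leftCost (3 / 2 - s) (fun x => infDist x ((3 / 2 - ·) '' α) ^ 2) := by
  rw [integral_P2_eq_leftCost_add (by fun_prop) s]
  simp only [infDist_sub_left]

lemma le_distortion_P2 {α : Set ℝ} (hfin : α.Finite) (hne : α.Nonempty) (hcard : α.ncard ≤ 4) :
    (19 - 12 * √2) / 192 ≤ distortion P2 α := by
  obtain ⟨y, hy, rfl⟩ := exists_monotone_range_eq hfin hne hcard
  have h₀₁ : y 0 ≤ y 1 := hy (by decide)
  have h₁₂ : y 1 ≤ y 2 := hy (by decide)
  have h₂₃ : y 2 ≤ y 3 := hy (by decide)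
  obtain ⟨s, ⟨hs_ge, hs_le⟩, hleft, hright⟩ :=
    exists_mem_Icc_eq_or_le (by norm_num : (1 / 2 : ℝ) ≤ 1) ((y 1 + y 2) / 2)
  rw [distortion_eq_integral_infDist_sq _ hne, integral_infDist_sq_P2 s,
    ← tangentError_add_tangentError s]
  refine add_le_add
    (tangentError_le_leftCost_infDist_sq (a := y 0) hne ?_ h₀₁ h₁₂ hs_ge hleft)
    (tangentError_le_leftCost_infDist_sq (a := 3 / 2 - y 3) (b := 3 / 2 - y 2)
      (c := 3 / 2 - y 1) (hne.image _) ?_ (by linarith) (by linarith) (by linarith) ?_)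
  · simp only [forall_mem_range, Fin.forall_fin_succ]
    simp [h₂₃]
  · simp only [forall_mem_image, forall_mem_range, Fin.forall_fin_succ]
    grind
  · exact hright.imp (by rintro rfl; norm_num) (by intro h; linarith)

lemma distortion_P2_le :
    distortion P2 {(3 - √2) / 8, 3 * (3 - √2) / 8, 3 * (1 + √2) / 8, (9 + √2) / 8} ≤
      (19 - 12 * √2) / 192 := by
  rw [distortion_eq_integral_infDist_sq _ (by simp), integral_infDist_sq_P2 (3 / 4),
    show (3 / 2 - 3 / 4 : ℝ) = 3 / 4 by norm_num]
  have hleft := leftCost_infDist_sq_le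
    (α := {(3 - √2) / 8, 3 * (3 - √2) / 8, 3 * (1 + √2) / 8, (9 + √2) / 8}) (by simp) (by simp)
  have hright := leftCost_infDist_sq_le
    (α := (3 / 2 - ·) '' {(3 - √2) / 8, 3 * (3 - √2) / 8, 3 * (1 + √2) / 8, (9 + √2) / 8})
    ⟨(9 + √2) / 8, by simp, by ring⟩ ⟨3 * (1 + √2) / 8, by simp, by ring⟩
  linarith

end FourMeans

theorem stmt_7 :
    IsOptimal P2 4
      {(3 - Real.sqrt 2) / 8, 3 * (3 - Real.sqrt 2) / 8,
        3 * (1 + Real.sqrt 2) / 8, (9 + Real.sqrt 2) / 8} ∧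
    quantErr P2 4 = (19 - 12 * Real.sqrt 2) / 192 := by
  have hval := le_antisymm distortion_P2_le (le_distortion_P2 (by simp) (by simp)
    (ncard_insert_insert_insert_singleton_le _ _ _ _))
  have hopt := isOptimal_of_forall_distortion_le (by simp) (by simp)
    (ncard_insert_insert_insert_singleton_le _ _ _ _) fun β hfin hne hcard =>
      hval.trans_le (le_distortion_P2 hfin hne hcard)
  exact ⟨hopt, hopt.2.2.2.symm.trans hval⟩
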